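/- Let m ∈ ℝ, let σ ∈ S^m_f(ℝ^{2n}) and let z ∈ ℂ be such that there is c₀ > 0 with |z − σ(q, p)| ≥ c₀ ⟨ρ ⊕ f(r)^{-1}η⟩^m for all (q, p) ∈ ℝ^{2n}. Then the function (z − σ)^{-1} belongs to S^{-m}_f(ℝ^{2n}), and for every N ∈ ℕ there exists a constant C > 0, depending only on n, m, N and the seminorm |σ|_{S^m_f, N}, such that |(z − σ)^{-1}|_{S^{-m}_f, N} ≤ C Σ_{l=0}^{N} sup_{(q,p) ∈ ℝ^{2n}} ⟨ρ ⊕ f(r)^{-1}η⟩^{m(l+1)} |z − σ(q, p)|^{-(l+1)}. -/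

import Mathlib

open MeasureTheory Finset

noncomputable section

/-- Points of `ℝⁿ` (with `n = d + 1`) split as `q = (r, θ) ∈ ℝ × ℝ^d`. -/
abbrev Q (d : ℕ) : Type := ℝ × (Fin d → ℝ)

/-- The coordinate direction `∂_r`. -/
def eR (d : ℕ) : Q d := ((1 : ℝ), 0)

/-- The coordinate direction `∂_{θ_i}`. -/
def eTh (d : ℕ) (i : Fin d) : Q d := ((0 : ℝ), Pi.single i 1)

/-- Directional derivative of a complex-valued function. -/
def dirD {E : Type*} [NormedAddCommGroup E] [NormedSpace ℝ E]
    (v : E) (g : E → ℂ) : E → ℂ :=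
  fun x => fderiv ℝ g x v

/-- Multiindices `α = (α₀, α')` split as in the paper. -/
abbrev MIdx (d : ℕ) : Type := ℕ × (Fin d → ℕ)

/-- `|α| = α₀ + |α'|`. -/
def deg {d : ℕ} (α : MIdx d) : ℕ := α.1 + ∑ i, α.2 i

/-- `|α'|`, the angular part of a multiindex. -/
def degA {d : ℕ} (α : MIdx d) : ℕ := ∑ i, α.2 i

/-- `∂_q^α` acting on functions on `ℝⁿ = ℝ × ℝ^d`. -/
def mderiv1 {d : ℕ} (α : MIdx d) (g : Q d → ℂ) : Q d → ℂ :=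
  (dirD (eR d))^[α.1] <|
    (List.finRange d).foldr (fun i h => (dirD (eTh d i))^[α.2 i] h) g

/-- `∂_q^α ∂_p^β` acting on functions on phase space. -/
def mderiv2 {d : ℕ} (α β : MIdx d) (g : Q d × Q d → ℂ) : Q d × Q d → ℂ :=
  (dirD ((eR d, 0) : Q d × Q d))^[α.1] <|
  (List.finRange d).foldr (fun i h => (dirD ((eTh d i, 0) : Q d × Q d))^[α.2 i] h) <|
  (dirD (((0 : Q d), eR d) : Q d × Q d))^[β.1] <|
  (List.finRange d).foldr (fun i h => (dirD (((0 : Q d), eTh d i) : Q d × Q d))^[β.2 i] h) g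

/-- `∂_q^α ∂_p^β ∂_{q'}^γ` acting on amplitudes `a(q, p, q')`. -/
def mderiv3 {d : ℕ} (α β γ : MIdx d) (g : Q d × Q d × Q d → ℂ) : Q d × Q d × Q d → ℂ :=
  (dirD ((eR d, 0, 0) : Q d × Q d × Q d))^[α.1] <|
  (List.finRange d).foldr (fun i h => (dirD ((eTh d i, 0, 0) : Q d × Q d × Q d))^[α.2 i] h) <|
  (dirD (((0 : Q d), eR d, 0) : Q d × Q d × Q d))^[β.1] <|
  (List.finRange d).foldr (fun i h => (dirD (((0 : Q d), eTh d i, 0) : Q d × Q d × Q d))^[β.2 i] h) <|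
  (dirD (((0 : Q d), (0 : Q d), eR d) : Q d × Q d × Q d))^[γ.1] <|
  (List.finRange d).foldr (fun i h => (dirD (((0 : Q d), (0 : Q d), eTh d i) : Q d × Q d × Q d))^[γ.2 i] h) g

/-- `⟨p⟩ = (1 + ρ² + |η|²)^{1/2}`. -/
def brP {d : ℕ} (p : Q d) : ℝ := Real.sqrt (1 + p.1 ^ 2 + ∑ i, (p.2 i) ^ 2)

/-- `⟨ρ ⊕ f(r)⁻¹ η⟩` evaluated at a phase-space point. -/
def brF {d : ℕ} (f : ℝ → ℝ) (x : Q d × Q d) : ℝ :=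
  Real.sqrt (1 + x.2.1 ^ 2 + ∑ i, (x.2.2 i / f x.1.1) ^ 2)

/-- The standing assumption on `f : ℝ → [1, ∞)`: smooth, `f ≥ 1`, and all derivatives
of `log f` of order `≥ 1` are bounded. -/
def GoodF (f : ℝ → ℝ) : Prop :=
  ContDiff ℝ (⊤ : ℕ∞) f ∧ (∀ r, 1 ≤ f r) ∧
    ∀ j : ℕ, 1 ≤ j → ∃ C : ℝ, ∀ r, |iteratedDeriv j (fun s => Real.log (f s)) r| ≤ C

/-- Membership in the symbol class `S^m_f(ℝ^{2n})`. -/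
def IsSymbol {d : ℕ} (f : ℝ → ℝ) (m : ℝ) (a : Q d × Q d → ℂ) : Prop :=
  ContDiff ℝ (⊤ : ℕ∞) a ∧
    ∀ α β : MIdx d, ∃ C : ℝ, ∀ x : Q d × Q d,
      ‖mderiv2 α β a x‖ ≤ C * f x.1.1 ^ ((degA α : ℝ) - (degA β : ℝ)) * brF f x ^ (m - (deg β : ℝ))

/-- The finite set of multiindices of length `≤ N`. -/
def idxSet (d N : ℕ) : Finset (MIdx d) :=
  ((Finset.range (N + 1)) ×ˢ Fintype.piFinset fun _ : Fin d => Finset.range (N + 1)).filter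
    fun α => deg α ≤ N

/-- The seminorm `|a|_{S^m_f, N}`. -/
def symNorm {d : ℕ} (f : ℝ → ℝ) (m : ℝ) (N : ℕ) (a : Q d × Q d → ℂ) : ℝ :=
  ∑ α ∈ idxSet d N, ∑ β ∈ idxSet d N,
    if deg α + deg β ≤ N then
      ⨆ x : Q d × Q d,
        f x.1.1 ^ (-(degA α : ℝ) + (degA β : ℝ)) * brF f x ^ (-m + (deg β : ℝ)) *
          ‖mderiv2 α β a x‖
    else 0

/-- `p · q`. -/
def qdot {d : ℕ} (p q : Q d) : ℝ := p.1 * q.1 + ∑ i, p.2 i * q.2 i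

/-- The oscillating factor `e^{i p · v / ℏ}`. -/
def ephase {d : ℕ} (ℏ : ℝ) (p v : Q d) : ℂ :=
  Complex.exp (Complex.I * Complex.ofReal (qdot p v) / Complex.ofReal ℏ)

/-- The quantization `Op^t_ℏ(a)` of a symbol, acting on functions (trivialized half-densities). -/
def Op {d : ℕ} (ℏ t : ℝ) (a : Q d × Q d → ℂ) (u : Q d → ℂ) : Q d → ℂ :=
  fun q => ((2 * Real.pi * ℏ) ^ (d + 1) : ℝ)⁻¹ •
    ∫ p : Q d, ∫ q' : Q d,
      a (t • q + (1 - t) • q', p) * ephase ℏ p (q - q') * u q'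

/-- Membership in `C_c^∞(ℝⁿ)`. -/
def IsCc {d : ℕ} (u : Q d → ℂ) : Prop := ContDiff ℝ (⊤ : ℕ∞) u ∧ HasCompactSupport u

/-- The `L²` inner product `⟨w, v⟩ = ∫ w \bar v`. -/
def l2inner {d : ℕ} (w v : Q d → ℂ) : ℂ := ∫ q : Q d, w q * (starRingEnd ℂ) (v q)

/-- The `L²` norm. -/
def l2norm {d : ℕ} (u : Q d → ℂ) : ℝ := (∫ q : Q d, ‖u q‖ ^ 2) ^ (1 / 2 : ℝ)

/-- `Σ_{|β| ≤ N} sup |∂^β u|`. -/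
def ckNorm {d : ℕ} (N : ℕ) (u : Q d → ℂ) : ℝ :=
  ∑ β ∈ idxSet d N, ⨆ q : Q d, ‖mderiv1 β u q‖

/-- `⟨ρ ⊕ f(tr + (1-t)r')⁻¹ η⟩` evaluated at a point `(q, p, q')`. -/
def brFA {d : ℕ} (f : ℝ → ℝ) (t : ℝ) (x : Q d × Q d × Q d) : ℝ :=
  Real.sqrt (1 + x.2.1.1 ^ 2 + ∑ i, (x.2.1.2 i / f (t * x.1.1 + (1 - t) * x.2.2.1)) ^ 2)

/-- Membership in the amplitude class `BS^m_{f,t}(ℝ^{3n})`. -/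
def IsAmp {d : ℕ} (f : ℝ → ℝ) (m t : ℝ) (a : Q d × Q d × Q d → ℂ) : Prop :=
  ContDiff ℝ (⊤ : ℕ∞) a ∧
    ∀ α β γ : MIdx d, ∃ C : ℝ, ∀ x : Q d × Q d × Q d,
      ‖mderiv3 α β γ a x‖ ≤
        C * f (t * x.1.1 + (1 - t) * x.2.2.1) ^ ((degA α : ℝ) - (degA β : ℝ) + (degA γ : ℝ)) *
          brFA f t x ^ (m - (deg β : ℝ))

/-- The seminorm `|a|_{BS^m_{f,t}, N}`. -/
def ampNorm {d : ℕ} (f : ℝ → ℝ) (m t : ℝ) (N : ℕ) (a : Q d × Q d × Q d → ℂ) : ℝ :=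
  ∑ α ∈ idxSet d N, ∑ β ∈ idxSet d N, ∑ γ ∈ idxSet d N,
    if deg α + deg β + deg γ ≤ N then
      ⨆ x : Q d × Q d × Q d,
        f (t * x.1.1 + (1 - t) * x.2.2.1) ^ (-(degA α : ℝ) + (degA β : ℝ) - (degA γ : ℝ)) *
          brFA f t x ^ (-m + (deg β : ℝ)) * ‖mderiv3 α β γ a x‖
    else 0

/-- The quantization of an amplitude `a(q, p, q')`. -/
def OpAmp {d : ℕ} (ℏ : ℝ) (a : Q d × Q d × Q d → ℂ) (u : Q d → ℂ) : Q d → ℂ :=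
  fun q => ((2 * Real.pi * ℏ) ^ (d + 1) : ℝ)⁻¹ •
    ∫ p : Q d, ∫ q' : Q d, a (q, p, q') * ephase ℏ p (q - q') * u q'


section helpers
variable {E : Type*} [NormedAddCommGroup E] [NormedSpace ℝ E] {ι : Type*}

def DL (v : ι → E) (L : List ι) (g : E → ℂ) : E → ℂ :=
  L.foldr (fun e h => dirD (v e) h) g

abbrev Sm (g : E → ℂ) : Prop := ContDiff ℝ (⊤ : ℕ∞) g

lemma Sm.diff {g : E → ℂ} (hg : Sm g) : Differentiable ℝ g :=
  ContDiff.differentiable hg (by simp)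

lemma Sm.dirD {g : E → ℂ} (hg : Sm g) (v : E) : Sm (dirD v g) := by
  unfold _root_.dirD
  have : ContDiff ℝ (⊤ : ℕ∞) (fderiv ℝ g) := ContDiff.fderiv_right hg (by simp)
  exact this.clm_apply contDiff_const

lemma dirD_comm {g : E → ℂ} (hg : Sm g) (v w : E) :
    dirD v (dirD w g) = dirD w (dirD v g) := by
  have hd : Differentiable ℝ (fderiv ℝ g) := by
    have : ContDiff ℝ (⊤ : ℕ∞) (fderiv ℝ g) := ContDiff.fderiv_right hg (by simp)
    exact this.differentiable (by simp)
  funext x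
  have h : ∀ v w : E, dirD v (dirD w g) x = fderiv ℝ (fderiv ℝ g) x v w := by
    intro v w
    unfold dirD
    rw [fderiv_clm_apply (hd x) (differentiableAt_const _)]
    simp
  rw [h, h]
  have hs : IsSymmSndFDerivAt ℝ g x :=
    (hg.contDiffAt).isSymmSndFDerivAt (by rw [minSmoothness_of_isRCLikeNormedField]; exact WithTop.coe_le_coe.2 (le_top : (2 : ℕ∞) ≤ ⊤))
  exact hs v w

lemma dirD_add {g h : E → ℂ} (hg : Sm g) (hh : Sm h) (v : E) :
    dirD v (fun x => g x + h x) = fun x => dirD v g x + dirD v h x := by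
  funext x
  unfold dirD
  rw [fderiv_fun_add (hg.diff x) (hh.diff x)]; rfl

lemma dirD_mul {g h : E → ℂ} (hg : Sm g) (hh : Sm h) (v : E) :
    dirD v (fun x => g x * h x) = fun x => dirD v g x * h x + g x * dirD v h x := by
  funext x
  unfold dirD
  rw [fderiv_fun_mul (hg.diff x) (hh.diff x)]
  simp; ring

lemma dirD_cmul {g : E → ℂ} (hg : Sm g) (c : ℂ) (v : E) :
    dirD v (fun x => c * g x) = fun x => c * dirD v g x := by
  funext x
  unfold dirD
  rw [fderiv_const_mul (hg.diff x)]
  simp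

lemma dirD_sub {g : E → ℂ} (z : ℂ) (v : E) :
    dirD v (fun x => z - g x) = fun x => (-1) * dirD v g x := by
  funext x
  unfold dirD
  rw [fderiv_const_sub]
  simp

lemma dirD_inv_pow {t : E → ℂ} (ht : Sm t) (h0 : ∀ x, t x ≠ 0) (v : E) (j : ℕ) :
    dirD v (fun x => (t x)⁻¹ ^ j) =
      fun x => (-(j : ℂ)) * ((t x)⁻¹ ^ (j + 1) * dirD v t x) := by
  have hi : Sm (fun x => (t x)⁻¹) := ContDiff.inv ht h0
  have h1 : ∀ x, dirD v (fun x => (t x)⁻¹) x = - ((t x)⁻¹ ^ 2 * dirD v t x) := by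
    intro x
    have h := congrFun (dirD_mul hi ht v) x
    have e : (fun x => (t x)⁻¹ * t x) = fun _ => (1 : ℂ) := by
      funext x; exact inv_mul_cancel₀ (h0 x)
    rw [e] at h
    have e2 : dirD v (fun _ : E => (1 : ℂ)) x = 0 := by simp [dirD]
    rw [e2] at h
    have := h0 x
    field_simp
    field_simp at h
    linear_combination -h
  induction j with
  | zero => funext x; simp [dirD]
  | succ j ih =>
    have hp : Sm (fun x => (t x)⁻¹ ^ j) := ContDiff.pow hi j
    have := dirD_mul hp hi v
    rw [ih] at this
    simp only [pow_succ _ j]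
    rw [this]
    funext x
    simp only [h1]
    push_cast
    ring

variable (v : ι → E)

lemma Sm.DL {g : E → ℂ} (hg : Sm g) (L : List ι) : Sm (DL v L g) := by
  induction L with
  | nil => exact hg
  | cons e L ih => exact ih.dirD (v e)

lemma DL_add {g h : E → ℂ} (hg : Sm g) (hh : Sm h) (L : List ι) :
    DL v L (fun x => g x + h x) = fun x => DL v L g x + DL v L h x := by
  induction L with
  | nil => rfl
  | cons e L ih =>
    change dirD (v e) (DL v L _) = _
    rw [ih, dirD_add (hg.DL v L) (hh.DL v L)]; rfl

lemma DL_cmul {g : E → ℂ} (hg : Sm g) (c : ℂ) (L : List ι) :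
    DL v L (fun x => c * g x) = fun x => c * DL v L g x := by
  induction L with
  | nil => rfl
  | cons e L ih =>
    change dirD (v e) (DL v L _) = _
    rw [ih, dirD_cmul (hg.DL v L)]; rfl

lemma DL_snoc (L : List ι) (e : ι) (g : E → ℂ) :
    DL v (L ++ [e]) g = DL v L (dirD (v e) g) := by
  simp [DL, List.foldr_append]

lemma DL_append (L M : List ι) (g : E → ℂ) :
    DL v (L ++ M) g = DL v L (DL v M g) := by
  simp [DL, List.foldr_append]

lemma DL_replicate (k : ℕ) (e : ι) (g : E → ℂ) :
    DL v (List.replicate k e) g = (dirD (v e))^[k] g := by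
  induction k with
  | zero => rfl
  | succ k ih =>
    rw [List.replicate_succ, Function.iterate_succ_apply', ← ih]; rfl

lemma DL_flatMap {κ : Type*} (l : List κ) (k : κ → ℕ) (e : κ → ι) (g : E → ℂ) :
    DL v (l.flatMap fun i => List.replicate (k i) (e i)) g =
      l.foldr (fun i h => (dirD (v (e i)))^[k i] h) g := by
  induction l with
  | nil => rfl
  | cons i l ih =>
    rw [List.flatMap_cons, DL_append, ih, DL_replicate]; rfl

lemma DL_perm {g : E → ℂ} (hg : Sm g) {L M : List ι} (h : L.Perm M) :
    DL v L g = DL v M g := by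
  induction h with
  | nil => rfl
  | cons e _ ih => exact congrArg (dirD (v e)) ih
  | swap a b L => exact dirD_comm (hg.DL v L) _ _
  | trans _ _ h1 h2 => exact h1.trans h2

def Bd (w : ι → ℝ) (x : E) (K : ℕ) (W : ℝ) (g : E → ℂ) : Prop :=
  ∀ L : List ι, L.length ≤ K → ‖DL v L g x‖ ≤ W * (L.map w).prod

variable {v}

lemma prod_pos' {w : ι → ℝ} (hw : ∀ i, 0 < w i) (L : List ι) : 0 < (L.map w).prod := by
  induction L with
  | nil => simp
  | cons e L ih => simpa using mul_pos (hw e) ih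

lemma Bd.step {w : ι → ℝ} {x : E} {K : ℕ} {W : ℝ} {g : E → ℂ}
    (h : Bd v w x (K + 1) W g) (e : ι) : Bd v w x K (W * w e) (dirD (v e) g) := by
  intro L hL
  have := h (L ++ [e]) (by simpa using hL)
  rw [DL_snoc] at this
  refine this.trans (le_of_eq ?_)
  simp; ring

lemma Bd.mono {w : ι → ℝ} (hw : ∀ i, 0 < w i) {x : E} {K K' : ℕ} {W W' : ℝ} {g : E → ℂ}
    (h : Bd v w x K W g) (hK : K' ≤ K) (hW : W ≤ W') : Bd v w x K' W' g := fun L hL =>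
  (h L (hL.trans hK)).trans (mul_le_mul_of_nonneg_right hW (prod_pos' hw L).le)

lemma Bd.nonneg {w : ι → ℝ} {x : E} {K : ℕ} {W : ℝ} {g : E → ℂ}
    (h : Bd v w x K W g) : 0 ≤ W := by
  have := h [] (by simp)
  simp at this
  exact (norm_nonneg _).trans this

lemma Bd.mul {w : ι → ℝ} (hw : ∀ i, 0 < w i) {x : E} (K : ℕ) :
    ∀ {W₁ W₂ : ℝ} {g h : E → ℂ}, Sm g → Sm h → Bd v w x K W₁ g → Bd v w x K W₂ h →
      Bd v w x K (2 ^ K * (W₁ * W₂)) (fun x => g x * h x) := by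
  induction K with
  | zero =>
    intro W₁ W₂ g h hg hh b1 b2 L hL
    obtain rfl : L = [] := by simpa using hL
    have h1 := b1 [] (by simp)
    have h2 := b2 [] (by simp)
    simp only [DL, List.foldr_nil, List.map_nil, List.prod_nil, mul_one, norm_mul, pow_zero,
      one_mul] at *
    exact mul_le_mul h1 h2 (norm_nonneg _) ((norm_nonneg _).trans h1)
  | succ K ih =>
    intro W₁ W₂ g h hg hh b1 b2 L hL
    rcases L.eq_nil_or_concat with rfl | ⟨M, e, rfl⟩
    · have h1 := b1 [] (by simp)
      have h2 := b2 [] (by simp)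
      have p1 := b1.nonneg
      have p2 := b2.nonneg
      simp only [DL, List.foldr_nil, List.map_nil, List.prod_nil, mul_one, norm_mul] at *
      refine (mul_le_mul h1 h2 (norm_nonneg _) ((norm_nonneg _).trans h1)).trans ?_
      exact le_mul_of_one_le_left (mul_nonneg p1 p2) (one_le_pow₀ (by norm_num))
    · have hM : M.length ≤ K := by simpa using hL
      simp only [List.concat_eq_append] at *
      rw [DL_snoc, dirD_mul hg hh, DL_add v (ContDiff.mul (hg.dirD _) hh)
        (ContDiff.mul hg (hh.dirD _))]
      have h1 := ih (hg.dirD (v e)) hh (b1.step e) (b2.mono hw K.le_succ le_rfl) M hM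
      have h2 := ih hg (hh.dirD (v e)) (b1.mono hw K.le_succ le_rfl) (b2.step e) M hM
      refine (norm_add_le _ _).trans ((add_le_add h1 h2).trans (le_of_eq ?_))
      simp; ring

lemma Bd_inv (B : ℝ) (k : ℕ) : ∀ j : ℕ, ∃ C > (0 : ℝ), ∀ (w : ι → ℝ), (∀ i, 0 < w i) →
    ∀ (x : E) (t : E → ℂ) (b : ℝ), 0 ≤ b → Sm t → (∀ x, t x ≠ 0) →
    (∀ L : List ι, L ≠ [] → L.length ≤ k → ‖DL v L t x‖ ≤ B * b * (L.map w).prod) →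
    Bd v w x k (C * ∑ l ∈ range (k + 1), b ^ l / ‖t x‖ ^ (l + j)) (fun x => (t x)⁻¹ ^ j) := by
  induction k with
  | zero =>
    intro j
    refine ⟨1, one_pos, ?_⟩
    intro w hw x t b hb ht h0 H L hL
    obtain rfl : L = [] := by simpa using hL
    simp [DL]
  | succ k ih =>
    intro j
    obtain ⟨C, hC, h⟩ := ih (j + 1)
    refine ⟨1 + j * (2 ^ k * (C * |B|)), by positivity, ?_⟩
    intro w hw x t b hb ht h0 H L hL
    have hi : Sm (fun x => (t x)⁻¹) := ContDiff.inv ht h0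
    have htx : 0 < ‖t x‖ := norm_pos_iff.2 (h0 x)
    rw [Finset.sum_range_succ']
    set S := ∑ l ∈ range (k + 1), b ^ (l + 1) / ‖t x‖ ^ (l + 1 + j) with hS
    have hSn : 0 ≤ S := Finset.sum_nonneg fun l _ => by positivity
    have hT : 0 ≤ b ^ 0 / ‖t x‖ ^ (0 + j) := by positivity
    rcases L.eq_nil_or_concat with rfl | ⟨M, e, rfl⟩
    · simp only [DL, List.foldr_nil, List.map_nil, List.prod_nil, mul_one]
      have : ‖(t x)⁻¹ ^ j‖ = b ^ 0 / ‖t x‖ ^ (0 + j) := by simp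
      rw [this]
      have : 0 ≤ j * (2 ^ k * (C * |B|)) := by positivity
      nlinarith [mul_nonneg this hT, mul_nonneg this hSn]
    · have hM : M.length ≤ k := by simpa using hL
      simp only [List.concat_eq_append] at *
      have hp : Sm (fun x => (t x)⁻¹ ^ (j + 1)) := ContDiff.pow hi _
      rw [DL_snoc, dirD_inv_pow ht h0, DL_cmul v (ContDiff.mul hp (ht.dirD _))]
      have b1 := h w hw x t b hb ht h0 (fun L hL hk => H L hL (hk.trans k.le_succ))
      have b2 : Bd v w x k (|B| * b * w e) (dirD (v e) t) := by
        intro L hL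
        have := H (L ++ [e]) (by simp) (by simpa using hL)
        rw [DL_snoc] at this
        refine this.trans ?_
        have hh : (List.map w (L ++ [e])).prod = w e * (List.map w L).prod := by simp; ring
        rw [hh, ← mul_assoc]
        have := prod_pos' hw L
        have := hw e
        gcongr
        exact le_abs_self B
      have b3 := Bd.mul hw k hp (ht.dirD (v e)) b1 b2 M hM
      rw [norm_mul, norm_neg, Complex.norm_natCast]
      refine (mul_le_mul_of_nonneg_left b3 (Nat.cast_nonneg j)).trans ?_
      have hh : (List.map w (M ++ [e])).prod = w e * (List.map w M).prod := by simp; ring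
      have hSb : (∑ l ∈ range (k + 1), b ^ l / ‖t x‖ ^ (l + (j + 1))) * b = S := by
        rw [hS, Finset.sum_mul]
        refine Finset.sum_congr rfl fun l _ => ?_
        rw [show l + (j + 1) = l + 1 + j by ring, pow_succ]; ring
      rw [hh]
      have e1 : (j : ℝ) * (2 ^ k * (C * ∑ l ∈ range (k + 1), b ^ l / ‖t x‖ ^ (l + (j + 1)) ) *
          1) = (j : ℝ) * (2 ^ k * (C * ∑ l ∈ range (k + 1), b ^ l / ‖t x‖ ^ (l + (j + 1)))) := by
        ring
      have hP : 0 < w e * (List.map w M).prod := mul_pos (hw e) (prod_pos' hw M)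
      calc _ = (j * (2 ^ k * (C * |B|))) * ((∑ l ∈ range (k + 1), b ^ l / ‖t x‖ ^ (l + (j + 1))) * b)
              * (w e * (List.map w M).prod) := by ring
        _ ≤ _ := by
          rw [hSb]
          refine mul_le_mul_of_nonneg_right ?_ hP.le
          have : 0 ≤ j * (2 ^ k * (C * |B|)) := by positivity
          nlinarith [mul_nonneg this hT, mul_nonneg this hSn]

end helpers

section concrete
variable {d : ℕ}

abbrev Dir (d : ℕ) : Type := Bool × Option (Fin d)

def vec (d : ℕ) : Dir d → Q d × Q d
  | (false, none) => (eR d, 0)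
  | (false, some i) => (eTh d i, 0)
  | (true, none) => (0, eR d)
  | (true, some i) => (0, eTh d i)

def wt (F b : ℝ) : Dir d → ℝ
  | (false, none) => 1
  | (false, some _) => F
  | (true, none) => b⁻¹
  | (true, some _) => F⁻¹ * b⁻¹

def can (α β : MIdx d) : List (Dir d) :=
  List.replicate α.1 (false, none) ++
  (((List.finRange d).flatMap fun i => List.replicate (α.2 i) (false, some i)) ++
  (List.replicate β.1 (true, none) ++
  ((List.finRange d).flatMap fun i => List.replicate (β.2 i) (true, some i))))

lemma mderiv2_eq (α β : MIdx d) (g : Q d × Q d → ℂ) :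
    mderiv2 α β g = DL (vec d) (can α β) g := by
  unfold can mderiv2
  rw [DL_append, DL_append, DL_append, DL_flatMap, DL_flatMap, DL_replicate, DL_replicate]
  rfl

lemma length_can (α β : MIdx d) : (can α β).length = deg α + deg β := by
  simp [can, deg, List.length_flatMap, Fin.sum_univ_def]
  ring

lemma prod_flat {κ ι : Type*} (l : List κ) (k : κ → ℕ) (e : κ → ι) (w : ι → ℝ) (c : ℝ)
    (h : ∀ i, w (e i) = c) :
    ((l.flatMap fun i => List.replicate (k i) (e i)).map w).prod = c ^ (l.map k).sum := by
  induction l with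
  | nil => simp
  | cons i l ih =>
    rw [List.flatMap_cons, List.map_append, List.prod_append, ih]
    simp [h, pow_add]

lemma prod_can {F b : ℝ} (hF : 0 < F) (hb : 0 < b) (α β : MIdx d) :
    ((can α β).map (wt F b)).prod =
      F ^ ((degA α : ℝ) - (degA β : ℝ)) * b ^ (-(deg β : ℝ)) := by
  unfold can
  rw [List.map_append, List.map_append, List.map_append, List.prod_append, List.prod_append,
    List.prod_append, prod_flat _ _ _ (wt F b) F (fun i => rfl),
    prod_flat _ _ _ (wt F b) (F⁻¹ * b⁻¹) (fun i => rfl), ← Fin.sum_univ_def, ← Fin.sum_univ_def]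
  simp only [List.map_replicate, List.prod_replicate, wt]
  rw [Real.rpow_sub hF, Real.rpow_neg hb.le, Real.rpow_natCast, Real.rpow_natCast,
    Real.rpow_natCast]
  unfold deg degA
  rw [pow_add, mul_pow, inv_pow, inv_pow, inv_pow]
  have := hF.ne'
  have := hb.ne'
  simp only [one_pow]
  field_simp

lemma exists_can (L : List (Dir d)) : ∃ α β : MIdx d, L.Perm (can α β) := by
  refine ⟨(L.count (false, none), fun i => L.count (false, some i)),
    (L.count (true, none), fun i => L.count (true, some i)), ?_⟩
  rw [List.perm_iff_count]
  have key : ∀ (k : Fin d → ℕ) (s : Bool) (y : Dir d),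
      ((List.finRange d).flatMap fun i => List.replicate (k i) ((s, some i) : Dir d)).count y
        = ∑ i, if (s, some i) = y then k i else 0 := by
    intro k s y
    rw [List.count_flatMap, Fin.sum_univ_def]
    congr 1
    refine List.map_congr_left fun i _ => ?_
    simp [List.count_replicate]
  rintro ⟨s, y⟩
  unfold can
  rw [List.count_append, List.count_append, List.count_append, key, key]
  rcases s <;> rcases y with _ | i <;> simp [List.count_replicate]

lemma brF_ge (f : ℝ → ℝ) (x : Q d × Q d) : 0 < brF f x := by
  unfold brF
  apply Real.sqrt_pos.2
  have : 0 ≤ ∑ i, (x.2.2 i / f x.1.1) ^ 2 := Finset.sum_nonneg fun i _ => sq_nonneg _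
  nlinarith [sq_nonneg x.2.1]

lemma wt_pos {F b : ℝ} (hF : 0 < F) (hb : 0 < b) (e : Dir d) : 0 < wt F b e := by
  rcases e with ⟨_ | _, _ | _⟩ <;> simp only [wt] <;> positivity

lemma mem_idx {N : ℕ} {α : MIdx d} : α ∈ idxSet d N ↔ deg α ≤ N := by
  unfold idxSet
  simp only [Finset.mem_filter, Finset.mem_product, Finset.mem_range, Fintype.mem_piFinset,
    and_iff_right_iff_imp]
  intro h
  unfold deg at h
  refine ⟨by omega, fun i => ?_⟩
  have := Finset.single_le_sum (f := α.2) (fun i _ => Nat.zero_le _) (Finset.mem_univ i)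
  omega

/-- weight identity -/
lemma wt_cancel {F b : ℝ} (hF : 0 < F) (hb : 0 < b) (m : ℝ) (α β : MIdx d) :
    (F ^ (-(degA α : ℝ) + (degA β : ℝ)) * b ^ (-m + (deg β : ℝ))) *
      (b ^ m * ((can α β).map (wt F b)).prod) = 1 := by
  rw [prod_can hF hb]
  have e1 : F ^ (-(degA α : ℝ) + (degA β : ℝ)) * F ^ ((degA α : ℝ) - (degA β : ℝ)) = 1 := by
    rw [← Real.rpow_add hF]; ring_nf; simp
  have e2 : b ^ (-m + (deg β : ℝ)) * (b ^ m * b ^ (-(deg β : ℝ))) = 1 := by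
    rw [← Real.rpow_add hb, ← Real.rpow_add hb]; ring_nf; simp
  calc _ = (F ^ (-(degA α : ℝ) + (degA β : ℝ)) * F ^ ((degA α : ℝ) - (degA β : ℝ))) *
      (b ^ (-m + (deg β : ℝ)) * (b ^ m * b ^ (-(deg β : ℝ)))) := by ring
    _ = 1 := by rw [e1, e2, one_mul]

lemma symbol_bd {f : ℝ → ℝ} (hf : ∀ r, 0 < f r) {m : ℝ} {N : ℕ} {B : ℝ} {s : Q d × Q d → ℂ}
    (hs : IsSymbol f m s) (hB : symNorm f m N s ≤ B) (x : Q d × Q d) (L : List (Dir d))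
    (hL : L.length ≤ N) :
    ‖DL (vec d) L s x‖ ≤ B * brF f x ^ m * (L.map (wt (f x.1.1) (brF f x))).prod := by
  obtain ⟨α, β, hp⟩ := exists_can L
  rw [DL_perm _ hs.1 hp, (hp.map _).prod_eq, ← mderiv2_eq]
  have hlen : deg α + deg β ≤ N := by rw [← length_can, ← hp.length_eq]; exact hL
  have hb := brF_ge f x
  have nn : ∀ (α β : MIdx d) (x : Q d × Q d),
      0 ≤ f x.1.1 ^ (-(degA α : ℝ) + (degA β : ℝ)) * brF f x ^ (-m + (deg β : ℝ)) *
          ‖mderiv2 α β s x‖ := fun α β x => by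
    have := hf x.1.1
    have := brF_ge f x
    positivity
  have hsup : (⨆ x : Q d × Q d,
        f x.1.1 ^ (-(degA α : ℝ) + (degA β : ℝ)) * brF f x ^ (-m + (deg β : ℝ)) *
          ‖mderiv2 α β s x‖) ≤ B := by
    refine le_trans ?_ hB
    unfold symNorm
    have nn2 : ∀ α β : MIdx d, 0 ≤ (if deg α + deg β ≤ N then
      ⨆ x : Q d × Q d,
        f x.1.1 ^ (-(degA α : ℝ) + (degA β : ℝ)) * brF f x ^ (-m + (deg β : ℝ)) *
          ‖mderiv2 α β s x‖
      else 0) := fun α β => by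
      split_ifs
      · exact Real.iSup_nonneg (nn α β)
      · exact le_rfl
    refine le_trans ?_ (Finset.single_le_sum (fun α _ => Finset.sum_nonneg fun β _ => nn2 α β)
      (mem_idx.2 (by omega : deg α ≤ N)))
    refine le_trans ?_ (Finset.single_le_sum (fun β _ => nn2 α β)
      (mem_idx.2 (by omega : deg β ≤ N)))
    rw [if_pos hlen]
  have hbdd : BddAbove (Set.range fun x : Q d × Q d =>
        f x.1.1 ^ (-(degA α : ℝ) + (degA β : ℝ)) * brF f x ^ (-m + (deg β : ℝ)) *
          ‖mderiv2 α β s x‖) := by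
    obtain ⟨C, hC⟩ := hs.2 α β
    refine ⟨C, ?_⟩
    rintro _ ⟨y, rfl⟩
    have h1 := hf y.1.1
    have h2 := brF_ge f y
    have hw := wt_cancel h1 h2 m α β
    have e : C * f y.1.1 ^ ((degA α : ℝ) - (degA β : ℝ)) * brF f y ^ (m - (deg β : ℝ)) =
        C * (brF f y ^ m * ((can α β).map (wt (f y.1.1) (brF f y))).prod) := by
      rw [prod_can h1 h2, sub_eq_add_neg m, Real.rpow_add h2]; ring
    refine (mul_le_mul_of_nonneg_left ((hC y).trans_eq e) (by positivity)).trans (le_of_eq ?_)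
    linear_combination C * hw
  have h1 := (le_ciSup hbdd x).trans hsup
  have hF := hf x.1.1
  have hw := wt_cancel hF hb m α β
  have hP := prod_pos' (fun e => wt_pos hF hb e) (can α β)
  have h2 : 0 ≤ brF f x ^ m * ((can α β).map (wt (f x.1.1) (brF f x))).prod := by positivity
  have h3 := mul_le_mul_of_nonneg_right h1 h2
  calc ‖mderiv2 α β s x‖ = _ := by
        rw [← one_mul ‖mderiv2 α β s x‖, ← hw]
    _ ≤ _ := (le_of_eq (by ring)).trans h3
    _ = _ := by ring

lemma main_bd (d N : ℕ) (m B : ℝ) : ∃ C > (0 : ℝ), ∀ f : ℝ → ℝ, (∀ r, 0 < f r) →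
    ∀ s : Q d × Q d → ℂ, IsSymbol f m s → symNorm f m N s ≤ B → ∀ z : ℂ,
    (∀ x, z - s x ≠ 0) → ∀ (α β : MIdx d), deg α + deg β ≤ N → ∀ x,
      ‖mderiv2 α β (fun x => (z - s x)⁻¹) x‖ ≤
        C * (∑ l ∈ Finset.range (N + 1), (brF f x ^ m) ^ (l + 1) / ‖z - s x‖ ^ (l + 1)) *
          ((brF f x ^ (-m)) * ((can α β).map (wt (f x.1.1) (brF f x))).prod) := by
  obtain ⟨C, hC, h⟩ := Bd_inv (v := vec d) B N 1
  refine ⟨C, hC, ?_⟩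
  intro f hf s hs hB z h0 α β hN x
  have hF := hf x.1.1
  have hb := brF_ge f x
  have hsm : Sm (fun x => z - s x) := ContDiff.sub contDiff_const hs.1
  have := h (wt (f x.1.1) (brF f x)) (wt_pos hF hb) x (fun x => z - s x) (brF f x ^ m)
    (by positivity) hsm h0 (by
      intro L hL hk
      rcases L.eq_nil_or_concat with rfl | ⟨M, e, rfl⟩
      · exact absurd rfl hL
      have h1 := symbol_bd hf hs hB x _ hk
      simp only [List.concat_eq_append] at *
      rw [DL_snoc] at h1 ⊢
      rw [dirD_sub, DL_cmul _ (Sm.dirD hs.1 _)]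
      simpa using h1) (can α β) (by rw [length_can]; exact hN)
  simp only [pow_one] at this
  rw [mderiv2_eq]
  refine this.trans (le_of_eq ?_)
  rw [← mul_assoc, mul_assoc C _ (brF f x ^ (-m))]
  congr 2
  rw [Finset.sum_mul]
  refine Finset.sum_congr rfl fun l _ => ?_
  rw [Real.rpow_neg hb.le, pow_succ]
  have : brF f x ^ m ≠ 0 := (Real.rpow_pos_of_pos hb m).ne'
  field_simp
  ring

end concrete

/-- the resolvent symbol `(z - σ)⁻¹` belongs to `S^{-m}_f` with seminorm
controlled by `Δ_N(z)`. -/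
theorem statement15 (d : ℕ) (f : ℝ → ℝ) (hf : GoodF f) (m : ℝ) (N : ℕ) (B : ℝ) :
    ∃ C > (0 : ℝ), ∀ σs : Q d × Q d → ℂ, IsSymbol f m σs → symNorm f m N σs ≤ B →
      ∀ z : ℂ, ∀ c₀ > (0 : ℝ), (∀ x : Q d × Q d, c₀ * brF f x ^ m ≤ ‖z - σs x‖) →
        IsSymbol f (-m) (fun x => (z - σs x)⁻¹) ∧
        symNorm f (-m) N (fun x => (z - σs x)⁻¹) ≤
          C * ∑ l ∈ Finset.range (N + 1),
            ⨆ x : Q d × Q d, brF f x ^ (m * ((l : ℝ) + 1)) / ‖z - σs x‖ ^ (l + 1) := by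
  have hfp : ∀ r, 0 < f r := fun r => one_pos.trans_le (hf.2.1 r)
  obtain ⟨C, hC, H⟩ := main_bd d N m B
  refine ⟨((idxSet d N).card * (idxSet d N).card : ℝ) * C + 1, by positivity, ?_⟩
  intro s hs hB z c₀ hc hz
  have hpos : ∀ x : Q d × Q d, 0 < brF f x ^ m := fun x => Real.rpow_pos_of_pos (brF_ge f x) m
  have hzp : ∀ x, 0 < ‖z - s x‖ := fun x => (mul_pos hc (hpos x)).trans_le (hz x)
  have h0 : ∀ x, z - s x ≠ 0 := fun x => norm_pos_iff.1 (hzp x)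
  have hle : ∀ (l : ℕ) (x : Q d × Q d),
      (brF f x ^ m) ^ (l + 1) / ‖z - s x‖ ^ (l + 1) ≤ (c₀⁻¹) ^ (l + 1) := by
    intro l x
    rw [← div_pow]
    have h1 := hpos x
    have h2 := hzp x
    refine pow_le_pow_left₀ (by positivity) ?_ _
    rw [div_le_iff₀ h2, inv_mul_eq_div, le_div_iff₀ hc, mul_comm]
    exact hz x
  have hpw : ∀ (l : ℕ) (x : Q d × Q d),
      brF f x ^ (m * ((l : ℝ) + 1)) = (brF f x ^ m) ^ (l + 1) := by
    intro l x
    rw [Real.rpow_mul (brF_ge f x).le, ← Real.rpow_natCast]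
    push_cast
    rfl
  simp only [hpw]
  have hbdd : ∀ l : ℕ, BddAbove (Set.range fun x : Q d × Q d =>
      (brF f x ^ m) ^ (l + 1) / ‖z - s x‖ ^ (l + 1)) := by
    intro l
    refine ⟨(c₀⁻¹) ^ (l + 1), ?_⟩
    rintro _ ⟨x, rfl⟩
    exact hle l x
  refine ⟨⟨ContDiff.inv (ContDiff.sub contDiff_const hs.1) h0, ?_⟩, ?_⟩
  · intro α β
    obtain ⟨C', hC', H'⟩ := main_bd d (deg α + deg β) m (symNorm f m (deg α + deg β) s)
    refine ⟨C' * ∑ l ∈ Finset.range (deg α + deg β + 1), (c₀⁻¹) ^ (l + 1), fun x => ?_⟩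
    refine (H' f hfp s hs le_rfl z h0 α β le_rfl x).trans ?_
    have hF := hfp x.1.1
    have hb := brF_ge f x
    have e : brF f x ^ (-m) * ((can α β).map (wt (f x.1.1) (brF f x))).prod =
        f x.1.1 ^ ((degA α : ℝ) - (degA β : ℝ)) * brF f x ^ (-m - (deg β : ℝ)) := by
      rw [prod_can hF hb, sub_eq_add_neg (-m), Real.rpow_add hb]; ring
    rw [e, mul_assoc (C' * _)]
    refine mul_le_mul_of_nonneg_right ?_ (by positivity)
    exact mul_le_mul_of_nonneg_left (Finset.sum_le_sum fun l _ => hle l x) hC'.le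
  · set S := ∑ l ∈ Finset.range (N + 1),
      ⨆ x : Q d × Q d, (brF f x ^ m) ^ (l + 1) / ‖z - s x‖ ^ (l + 1) with hS
    have hSn : 0 ≤ S := Finset.sum_nonneg fun l _ => Real.iSup_nonneg fun x => by
      have h1 := hpos x
      positivity
    have key : ∀ α β : MIdx d, (if deg α + deg β ≤ N then
      ⨆ x : Q d × Q d,
        f x.1.1 ^ (-(degA α : ℝ) + (degA β : ℝ)) * brF f x ^ (-(-m) + (deg β : ℝ)) *
          ‖mderiv2 α β (fun x => (z - s x)⁻¹) x‖
      else 0) ≤ C * S := by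
      intro α β
      split_ifs with hN
      · refine ciSup_le fun x => ?_
        have hF := hfp x.1.1
        have hb := brF_ge f x
        refine (mul_le_mul_of_nonneg_left (H f hfp s hs hB z h0 α β hN x)
          (by positivity)).trans ?_
        have hw := wt_cancel hF hb (-m) α β
        have hsum : ∑ l ∈ Finset.range (N + 1),
            (brF f x ^ m) ^ (l + 1) / ‖z - s x‖ ^ (l + 1) ≤ S :=
          Finset.sum_le_sum fun l _ => le_ciSup (hbdd l) x
        refine le_trans (le_of_eq ?_) (mul_le_mul_of_nonneg_left hsum hC.le)
        rw [mul_left_comm, hw, mul_one]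
      · positivity
    unfold symNorm
    refine (Finset.sum_le_sum fun α _ => Finset.sum_le_sum fun β _ => key α β).trans ?_
    simp only [Finset.sum_const, nsmul_eq_mul]
    nlinarith

end
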